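/- Cocycle relation for first Chern–Simons type classes (case k = 2 of the descent equations): Let A_0, A_1, A_2 be lattice 1-forms on ℤ^D, set F_i = dA_i, η^{i,j} = A_i − A_j, and let r ≥ 2. Define Q_r^{(1)}(A, A') = Σ_{m=0}^{r−1} (dA)^m ∧ (A' − A) ∧ (dA')^{r−1−m} and Q_r^{(2)}(A_0,A_1,A_2) = Σ_{m_0+m_1+m_2 = r−2, m_i ∈ ℕ} F_0^{m_0} ∧ η^{1,0} ∧ F_1^{m_1} ∧ η^{2,1} ∧ F_2^{m_2}, with all products the noncommutative wedge. Then Q_r^{(1)}(A_1, A_2) − Q_r^{(1)}(A_0, A_2) + Q_r^{(1)}(A_0, A_1) = d Q_r^{(2)}(A_0, A_1, A_2). -/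

import Mathlib

open scoped BigOperators

/-- A site of the hypercubic lattice `ℤ^D`. -/
abbrev Site (D : ℕ) := Fin D → ℤ

/-- The coefficient function of a lattice form on `ℤ^D`: to each site it assigns a
real coefficient depending on a sequence of direction indices (a `k`-form only
uses the first `k` indices). -/
abbrev Coeff (D : ℕ) := Site D → (ℕ → Fin D) → ℝ

/-- Shift a site by the `μ`-th standard basis vector `ê_μ`. -/
def shiftSite {D : ℕ} (n : Site D) (μ : Fin D) : Site D :=
  fun ν => n ν + if ν = μ then 1 else 0

/-- Forward difference operator `(Δ_μ f)(n) = f(n + ê_μ) - f(n)`. -/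
def fdiff {D : ℕ} (μ : Fin D) (f : Site D → ℝ) (n : Site D) : ℝ :=
  f (shiftSite n μ) - f n

/-- Shift a site by `ê_{μ 0} + ê_{μ 1} + ⋯ + ê_{μ (k-1)}`. -/
def multiShift {D : ℕ} (k : ℕ) (n : Site D) (μ : ℕ → Fin D) : Site D :=
  fun ν => n ν + ∑ i ∈ Finset.range k, (if ν = μ i then 1 else 0)

/-- Antisymmetrization of a coefficient function over its first `k` indices. -/
noncomputable def alt {D : ℕ} (k : ℕ) (c : Coeff D) : Coeff D :=
  fun n μ => ((k.factorial : ℝ))⁻¹ *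
    ∑ σ : Equiv.Perm (Fin k), ((Equiv.Perm.sign σ : ℤ) : ℝ) *
      c n (fun i => if h : i < k then μ ↑(σ ⟨i, h⟩) else μ i)

/-- The lattice exterior derivative of a `k`-form: the antisymmetrization over all
`k+1` indices of `Δ_μ ω_{μ₁⋯μ_k}(n)`. -/
noncomputable def extd {D : ℕ} (k : ℕ) (ω : Coeff D) : Coeff D :=
  alt (k+1) (fun n μ => fdiff (μ 0) (fun x => ω x (fun i => μ (i+1))) n)

/-- The noncommutative wedge product of a `k`-form and an `l`-form on the lattice:
the antisymmetrization over all `k+l` indices of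
`ω_{μ₁⋯μ_k}(n) · θ_{ν₁⋯ν_l}(n + ê_{μ₁} + ⋯ + ê_{μ_k})`. -/
noncomputable def wedge {D : ℕ} (k l : ℕ) (ω θ : Coeff D) : Coeff D :=
  alt (k+l) (fun n μ => ω n μ * θ (multiShift k n μ) (fun i => μ (i+k)))

/-- Iterated noncommutative wedge power of a 2-form (the empty product is the
constant `1`, a 0-form). -/
noncomputable def wpow {D : ℕ} (F : Coeff D) : ℕ → Coeff D
  | 0 => fun _ _ => 1
  | m+1 => wedge 2 (2*m) F (wpow F m)

/-- Noncommutative wedge product of a list of (degree, form) pairs. -/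
noncomputable def wedgeList {D : ℕ} : List (ℕ × Coeff D) → Coeff D
  | [] => fun _ _ => 1
  | (d, ω) :: rest => wedge d ((rest.map Prod.fst).sum) ω (wedgeList rest)

/-- `ω` is a genuine lattice `k`-form: its coefficient depends only on the first
`k` indices and is totally antisymmetric in them. -/
def IsLatticeForm (D k : ℕ) (ω : Coeff D) : Prop :=
  (∀ (n : Site D) (μ ν : ℕ → Fin D), (∀ i < k, μ i = ν i) → ω n μ = ω n ν) ∧
  (∀ (n : Site D) (μ : ℕ → Fin D) (σ : Equiv.Perm (Fin k)),
    ω n (fun i => if h : i < k then μ ↑(σ ⟨i, h⟩) else μ i)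
      = ((Equiv.Perm.sign σ : ℤ) : ℝ) * ω n μ)

/-- Extend a tuple `m : Fin j → ℕ` to `ℕ → ℕ` by zero. -/
def mext {j : ℕ} (m : Fin j → ℕ) : ℕ → ℕ :=
  fun i => if h : i < j then m ⟨i, h⟩ else 0

/-- The curvature 2-form `F = dA` of a lattice 1-form `A`. -/
noncomputable def curv {D : ℕ} (A : Coeff D) : Coeff D := extd 1 A

/-- The standard descent product
`F_0^{m_0} ∧ η^{1,0} ∧ F_1^{m_1} ∧ η^{2,1} ∧ ⋯ ∧ η^{k,k-1} ∧ F_k^{m_k}`,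
with `F_i = dA_i` and `η^{i,i-1} = A_i - A_{i-1}`, as a list of (degree, form) pairs. -/
noncomputable def descentList {D : ℕ} (k : ℕ) (A : ℕ → Coeff D) (m : ℕ → ℕ) : List (ℕ × Coeff D) :=
  (2 * m 0, wpow (curv (A 0)) (m 0)) ::
    (List.range k).flatMap (fun i =>
      [(1, A (i+1) - A i), (2 * m (i+1), wpow (curv (A (i+1))) (m (i+1)))])

/-- The Chern–Simons type characteristic class `Q_r^{(k)}(A_0,…,A_k)` on the lattice:
the sum over compositions `m_0 + ⋯ + m_k = r - k` of the descent products. -/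
noncomputable def Qpoly {D : ℕ} (r k : ℕ) (A : ℕ → Coeff D) : Coeff D :=
  ∑ m ∈ Finset.Nat.antidiagonalTuple (k+1) (r - k), wedgeList (descentList k A (mext m))

/-- The first Chern–Simons type class
`Q_r^{(1)}(A, A') = Σ_{m=0}^{r−1} (dA)^m ∧ (A' − A) ∧ (dA')^{r−1−m}`. -/
noncomputable def Q1 {D : ℕ} (r : ℕ) (A A' : Coeff D) : Coeff D :=
  ∑ m ∈ Finset.range r,
    wedgeList [(2 * m, wpow (curv A) m), (1, A' - A),
               (2 * (r - 1 - m), wpow (curv A') (r - 1 - m))]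

/-- The second Chern–Simons type class
`Q_r^{(2)}(A₀,A₁,A₂) = Σ_{m₀+m₁+m₂=r−2} F₀^{m₀} ∧ η^{1,0} ∧ F₁^{m₁} ∧ η^{2,1} ∧ F₂^{m₂}`. -/
noncomputable def Q2 {D : ℕ} (r : ℕ) (A₀ A₁ A₂ : Coeff D) : Coeff D :=
  ∑ m ∈ Finset.Nat.antidiagonalTuple 3 (r - 2),
    wedgeList [(2 * m 0, wpow (curv A₀) (m 0)), (1, A₁ - A₀),
               (2 * m 1, wpow (curv A₁) (m 1)), (1, A₂ - A₁),
               (2 * m 2, wpow (curv A₂) (m 2))]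

/-!
The antisymmetrization over all indices absorbs, up to sign, any permutation of some of them; hence
an antisymmetrization inside a wedge product or an exterior derivative may be dropped. This reduces
associativity of the wedge product, the graded Leibniz rule and `d² = 0` to identities between
unsymmetrized coefficients, and makes the lattice forms a differential graded ring, which need not
be graded commutative.

In such a ring `F₀, F₁, F₂` are closed and pass through `d` unchanged, while `d η^{i,j} = Fᵢ - Fⱼ`.
Applied to `Q⁽²⁾`, the Leibniz rule at `η^{1,0}` and at `η^{2,1}` produces sums of the type
`∑ xᵃ (y - x) yᵇ = yⁿ⁺¹ - xⁿ⁺¹`, which telescope to `Q⁽¹⁾(A₁, A₂) - Q⁽¹⁾(A₀, A₂) + Q⁽¹⁾(A₀, A₁)`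
because `Q⁽¹⁾` is linear in its factor `η` and `η^{2,0} = η^{1,0} + η^{2,1}`.
-/

section Transgression

open Finset

theorem sum_antidiagonalTuple_succ {M : Type*} [AddCommMonoid M] (k n : ℕ)
    (f : (Fin (k + 1) → ℕ) → M) :
    ∑ m ∈ Finset.Nat.antidiagonalTuple (k + 1) n, f m =
      ∑ p ∈ antidiagonal n, ∑ m ∈ Finset.Nat.antidiagonalTuple k p.2, f (Fin.cons p.1 m) := by
  rw [sum_sigma']
  refine sum_bij' (fun m _ => ⟨(m 0, ∑ i, Fin.tail m i), Fin.tail m⟩)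
    (fun x _ => Fin.cons x.1.1 x.2) ?_ ?_ ?_ ?_ ?_ <;>
  simp +contextual [Finset.Nat.mem_antidiagonalTuple, Fin.sum_univ_succ, Fin.tail]

variable {R : Type*}

section Semiring

variable [Semiring R]

/-- The sum `∑ a + b = n, xᵃ u yᵇ`, which interpolates between `xⁿ⁺¹` and `yⁿ⁺¹`: an antiderivation
with `d x = d y = 0` and `d u = y - x` sends it to `yⁿ⁺¹ - xⁿ⁺¹`. For `x = F₀`, `y = F₁` and
`u = A₁ - A₀` it is the class `Q⁽¹⁾` of degree `n + 1` in the curvatures. -/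
def transgression (x u y : R) (n : ℕ) : R :=
  ∑ p ∈ antidiagonal n, x ^ p.1 * (u * y ^ p.2)

theorem transgression_zero (x u y : R) : transgression x u y 0 = u := by
  simp [transgression]

theorem transgression_add (x u v y : R) (n : ℕ) :
    transgression x (u + v) y n = transgression x u y n + transgression x v y n := by
  simp only [transgression, add_mul, mul_add, sum_add_distrib]

theorem transgression_succ (x u y : R) (n : ℕ) :
    transgression x u y (n + 1) = x * transgression x u y n + u * y ^ (n + 1) := by
  simp only [transgression, Finset.Nat.sum_antidiagonal_succ, mul_sum, pow_succ' x, mul_assoc,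
    pow_zero, one_mul]
  rw [add_comm]

theorem transgression_succ' (x u y : R) (n : ℕ) :
    transgression x u y (n + 1) =
      ∑ p ∈ antidiagonal n, x ^ p.1 * (u * y ^ (p.2 + 1)) + x ^ (n + 1) * u := by
  rw [transgression, Finset.Nat.sum_antidiagonal_succ', pow_zero, mul_one, add_comm]

end Semiring

theorem map_pow_mul_of_map_mul [Monoid R] {d : R → R} {x : R} (hx : ∀ w, d (x * w) = x * d w)
    (a : ℕ) (w : R) : d (x ^ a * w) = x ^ a * d w := by
  induction a with
  | zero => simp
  | succ a ih => rw [pow_succ', mul_assoc, hx, ih, mul_assoc]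

theorem map_pow_of_map_mul [MonoidWithZero R] {d : R → R} {x : R} (h_one : d 1 = 0)
    (hx : ∀ w, d (x * w) = x * d w) (a : ℕ) : d (x ^ a) = 0 := by
  simpa [h_one] using map_pow_mul_of_map_mul hx a 1

variable [Ring R]

theorem transgression_sub_self (x y : R) (n : ℕ) :
    transgression x (y - x) y n = y ^ (n + 1) - x ^ (n + 1) := by
  induction n with
  | zero => simp [transgression_zero]
  | succ n ih =>
    rw [transgression_succ, ih, pow_succ' y (n + 1), pow_succ' x (n + 1)]
    noncomm_ring

theorem sum_pow_mul_sub_mul_transgression (x y v z : R) (n : ℕ) :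
    ∑ p ∈ antidiagonal n, x ^ p.1 * ((y - x) * transgression y v z p.2) =
      transgression y v z (n + 1) - transgression x v z (n + 1) := by
  induction n with
  | zero => simp [transgression_succ, transgression_zero, sub_mul]
  | succ n ih =>
    have shift : ∑ p ∈ antidiagonal n, x ^ (p.1 + 1) * ((y - x) * transgression y v z p.2) =
        x * (transgression y v z (n + 1) - transgression x v z (n + 1)) := by
      simp only [← ih, mul_sum, pow_succ' x, mul_assoc]
    rw [Finset.Nat.sum_antidiagonal_succ, shift, transgression_succ y v z (n + 1),
      transgression_succ x v z (n + 1)]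
    noncomm_ring

theorem sum_pow_mul_mul_pow_sub_pow (x u y z : R) (n : ℕ) :
    ∑ p ∈ antidiagonal n, x ^ p.1 * (u * (z ^ (p.2 + 1) - y ^ (p.2 + 1))) =
      transgression x u z (n + 1) - transgression x u y (n + 1) := by
  simp only [transgression_succ', mul_sub, sum_sub_distrib, add_sub_add_right_eq_sub]

variable {d : R →+ R} {x y z u v : R}

theorem map_transgression (h_one : d 1 = 0) (hx : ∀ w, d (x * w) = x * d w)
    (hy : ∀ w, d (y * w) = y * d w) (hu : ∀ w, d (u * w) = (y - x) * w - u * d w) (n : ℕ) :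
    d (transgression x u y n) = y ^ (n + 1) - x ^ (n + 1) := by
  rw [← transgression_sub_self]
  simp only [transgression, map_sum, map_pow_mul_of_map_mul hx, hu,
    map_pow_of_map_mul h_one hy, mul_zero, sub_zero]

theorem transgression_cocycle (h_one : d 1 = 0) (hx : ∀ w, d (x * w) = x * d w)
    (hy : ∀ w, d (y * w) = y * d w) (hz : ∀ w, d (z * w) = z * d w)
    (hu : ∀ w, d (u * w) = (y - x) * w - u * d w)
    (hv : ∀ w, d (v * w) = (z - y) * w - v * d w) (n : ℕ) :
    transgression y v z (n + 1) - transgression x (u + v) z (n + 1) + transgression x u y (n + 1) =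
      d (∑ p ∈ antidiagonal n, x ^ p.1 * (u * transgression y v z p.2)) := by
  calc
    _ = (transgression y v z (n + 1) - transgression x v z (n + 1)) -
          (transgression x u z (n + 1) - transgression x u y (n + 1)) := by
      rw [transgression_add]; abel
    _ = ∑ p ∈ antidiagonal n, x ^ p.1 * ((y - x) * transgression y v z p.2 -
          u * (z ^ (p.2 + 1) - y ^ (p.2 + 1))) := by
      simp only [mul_sub (x ^ _), sum_sub_distrib, sum_pow_mul_sub_mul_transgression,
        sum_pow_mul_mul_pow_sub_pow]
    _ = _ := by
      simp only [map_sum, map_pow_mul_of_map_mul hx, hu, map_transgression h_one hy hz hv]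

end Transgression

section Antisymmetrization

variable {X : Type*}

/-- The index sequence `μ` with its first `k` entries permuted by `σ`. -/
def permuteIndices (k : ℕ) (σ : Equiv.Perm (Fin k)) (μ : ℕ → X) : ℕ → X :=
  fun i => if h : i < k then μ (σ ⟨i, h⟩) else μ i

theorem permuteIndices_of_lt {k : ℕ} (σ : Equiv.Perm (Fin k)) (μ : ℕ → X) {i : ℕ}
    (h : i < k) : permuteIndices k σ μ i = μ (σ ⟨i, h⟩) :=
  dif_pos h

theorem permuteIndices_of_le {k : ℕ} (σ : Equiv.Perm (Fin k)) (μ : ℕ → X) {i : ℕ}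
    (h : k ≤ i) : permuteIndices k σ μ i = μ i :=
  dif_neg h.not_gt

theorem permuteIndices_permuteIndices {k : ℕ} (σ τ : Equiv.Perm (Fin k)) (μ : ℕ → X) :
    permuteIndices k τ (permuteIndices k σ μ) = permuteIndices k (σ * τ) μ := by
  funext i
  unfold permuteIndices
  split_ifs <;> simp_all

section Embedding

variable {K N s : ℕ} {f : Fin K ↪ Fin N}

theorem permuteIndices_viaFintypeEmbedding_of_lt (hf : ∀ i, (f i : ℕ) = i + s)
    (σ : Equiv.Perm (Fin K)) (μ : ℕ → X) {i : ℕ} (hi : i < s) :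
    permuteIndices N (σ.viaFintypeEmbedding f) μ i = μ i := by
  rcases lt_or_ge i N with hN | hN
  · have notMem : (⟨i, hN⟩ : Fin N) ∉ Set.range f := by
      simp only [Set.mem_range, Fin.ext_iff, hf]
      omega
    rw [permuteIndices_of_lt _ _ hN, Equiv.Perm.viaFintypeEmbedding_apply_notMem_range _ _ notMem]
  · exact permuteIndices_of_le _ _ hN

theorem permuteIndices_viaFintypeEmbedding_add (hf : ∀ i, (f i : ℕ) = i + s)
    (σ : Equiv.Perm (Fin K)) (μ : ℕ → X) (i : ℕ) :
    permuteIndices N (σ.viaFintypeEmbedding f) μ (i + s) =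
      permuteIndices K σ (fun j => μ (j + s)) i := by
  rcases lt_or_ge i K with hK | hK
  · have hN : i + s < N := (hf ⟨i, hK⟩).symm.trans_lt (f ⟨i, hK⟩).isLt
    have image : (⟨i + s, hN⟩ : Fin N) = f ⟨i, hK⟩ := Fin.ext (hf ⟨i, hK⟩).symm
    rw [permuteIndices_of_lt _ _ hK, permuteIndices_of_lt _ _ hN, image,
      Equiv.Perm.viaFintypeEmbedding_apply_image, hf]
  · rw [permuteIndices_of_le _ _ hK]
    rcases lt_or_ge (i + s) N with hN | hN
    · have notMem : (⟨i + s, hN⟩ : Fin N) ∉ Set.range f := by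
        simp only [Set.mem_range, Fin.ext_iff, hf]
        omega
      rw [permuteIndices_of_lt _ _ hN,
        Equiv.Perm.viaFintypeEmbedding_apply_notMem_range _ _ notMem]
    · exact permuteIndices_of_le _ _ hN

end Embedding

variable {D : ℕ}

/-- The action of the symmetric group on coefficient functions by permuting the first `k`
indices. -/
def permRep (k : ℕ) : Representation ℝ (Equiv.Perm (Fin k)) (Coeff D) where
  toFun σ :=
    { toFun := fun c n μ => c n (permuteIndices k σ μ)
      map_add' := fun _ _ => rfl
      map_smul' := fun _ _ => rfl }
  map_one' := by
    ext c n μ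
    refine congrArg (c n) (funext fun i => ?_)
    simp [permuteIndices]
  map_mul' σ τ := by
    ext c n μ
    exact congrArg (c n) (permuteIndices_permuteIndices σ τ μ).symm

theorem permRep_apply (k : ℕ) (σ : Equiv.Perm (Fin k)) (c : Coeff D) (n : Site D)
    (μ : ℕ → Fin D) : permRep k σ c n μ = c n (permuteIndices k σ μ) :=
  rfl

theorem permRep_viaFintypeEmbedding_castLEEmb {K N : ℕ} (h : K ≤ N) (σ : Equiv.Perm (Fin K))
    (c : Coeff D) : permRep N (σ.viaFintypeEmbedding (Fin.castLEEmb h)) c = permRep K σ c := by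
  funext n μ
  exact congrArg (c n) (funext fun i =>
    permuteIndices_viaFintypeEmbedding_add (s := 0) (fun _ => rfl) σ μ i)

theorem sign_mul_sign_self {α R : Type*} [Fintype α] [DecidableEq α] [Ring R]
    (σ : Equiv.Perm α) : ((Equiv.Perm.sign σ : ℤ) : R) * ((Equiv.Perm.sign σ : ℤ) : R) = 1 := by
  rw [← Int.cast_mul, Int.units_coe_mul_self, Int.cast_one]

/-- Antisymmetrization `alt k` as a linear map. -/
noncomputable def altₗ (k : ℕ) : Coeff D →ₗ[ℝ] Coeff D :=
  (k.factorial : ℝ)⁻¹ • ∑ σ : Equiv.Perm (Fin k), ((Equiv.Perm.sign σ : ℤ) : ℝ) • permRep k σ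

theorem altₗ_apply (k : ℕ) (c : Coeff D) :
    altₗ k c = (k.factorial : ℝ)⁻¹ •
      ∑ σ : Equiv.Perm (Fin k), ((Equiv.Perm.sign σ : ℤ) : ℝ) • permRep k σ c := by
  simp only [altₗ, LinearMap.smul_apply, LinearMap.sum_apply]

theorem alt_eq_altₗ (k : ℕ) (c : Coeff D) : alt k c = altₗ k c := by
  funext n μ
  simp only [altₗ_apply, Pi.smul_apply, Finset.sum_apply, smul_eq_mul, permRep_apply]
  rfl

theorem altₗ_permRep {k : ℕ} (τ : Equiv.Perm (Fin k)) (c : Coeff D) :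
    altₗ k (permRep k τ c) = ((Equiv.Perm.sign τ : ℤ) : ℝ) • altₗ k c := by
  rw [altₗ_apply, altₗ_apply, smul_comm ((Equiv.Perm.sign τ : ℤ) : ℝ)]
  refine congrArg _ ?_
  rw [Finset.smul_sum]
  refine Fintype.sum_equiv (Equiv.mulRight τ) _ _ fun σ => ?_
  simp only [Equiv.coe_mulRight, map_mul, Units.val_mul, Int.cast_mul, Module.End.mul_apply,
    smul_smul]
  rw [mul_left_comm, sign_mul_sign_self, mul_one]

theorem permRep_altₗ {k : ℕ} (τ : Equiv.Perm (Fin k)) (c : Coeff D) :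
    permRep k τ (altₗ k c) = ((Equiv.Perm.sign τ : ℤ) : ℝ) • altₗ k c := by
  rw [altₗ_apply, map_smul, map_sum, smul_comm ((Equiv.Perm.sign τ : ℤ) : ℝ)]
  refine congrArg _ ?_
  rw [Finset.smul_sum]
  refine Fintype.sum_equiv (Equiv.mulLeft τ) _ _ fun σ => ?_
  simp only [Equiv.coe_mulLeft, map_mul, Units.val_mul, Int.cast_mul, Module.End.mul_apply,
    smul_smul, map_smul]
  rw [← mul_assoc, sign_mul_sign_self, one_mul]

theorem altₗ_permRep_of_le {K N : ℕ} (h : K ≤ N) (τ : Equiv.Perm (Fin K)) (c : Coeff D) :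
    altₗ N (permRep K τ c) = ((Equiv.Perm.sign τ : ℤ) : ℝ) • altₗ N c := by
  rw [← permRep_viaFintypeEmbedding_castLEEmb h, altₗ_permRep, Equiv.Perm.viaFintypeEmbedding_sign]

theorem inv_factorial_smul_sum_perm (k : ℕ) {M : Type*} [AddCommMonoid M] [Module ℝ M] (a : M) :
    (k.factorial : ℝ)⁻¹ • ∑ _σ : Equiv.Perm (Fin k), a = a := by
  rw [Finset.sum_const, Finset.card_univ, Fintype.card_perm, Fintype.card_fin,
    ← Nat.cast_smul_eq_nsmul ℝ, inv_smul_smul₀ (by positivity)]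

theorem altₗ_eq_self {k : ℕ} {c : Coeff D}
    (h : ∀ σ, permRep k σ c = ((Equiv.Perm.sign σ : ℤ) : ℝ) • c) : altₗ k c = c := by
  simp only [altₗ_apply, h, smul_smul, sign_mul_sign_self, one_smul, inv_factorial_smul_sum_perm]

-- Permutations of the `K` embedded indices are absorbed, with their sign, by `altₗ N`.
theorem altₗ_map_altₗ {K N : ℕ} (f : Fin K ↪ Fin N) (L : Coeff D →ₗ[ℝ] Coeff D) {c : Coeff D}
    (hL : ∀ σ, L (permRep K σ c) = permRep N (σ.viaFintypeEmbedding f) (L c)) :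
    altₗ N (L (altₗ K c)) = altₗ N (L c) := by
  rw [altₗ_apply K]
  simp only [map_smul, map_sum, hL, altₗ_permRep, Equiv.Perm.viaFintypeEmbedding_sign, smul_smul,
    sign_mul_sign_self, one_smul, inv_factorial_smul_sum_perm]

end Antisymmetrization

section TensorLevel

variable {D : ℕ}

theorem multiShift_zero (n : Site D) (μ : ℕ → Fin D) : multiShift 0 n μ = n := by
  funext a
  simp [multiShift]

theorem multiShift_congr {k : ℕ} (n : Site D) {μ ν : ℕ → Fin D} (h : ∀ i < k, μ i = ν i) :
    multiShift k n μ = multiShift k n ν := by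
  funext a
  exact congrArg (n a + ·) (Finset.sum_congr rfl fun i hi => by rw [h i (Finset.mem_range.1 hi)])

theorem multiShift_permuteIndices {k : ℕ} (n : Site D) (σ : Equiv.Perm (Fin k))
    (μ : ℕ → Fin D) : multiShift k n (permuteIndices k σ μ) = multiShift k n μ := by
  funext a
  simp only [multiShift, Finset.sum_range]
  refine congrArg (n a + ·) ?_
  exact Fintype.sum_equiv σ _ _ fun i => by rw [permuteIndices_of_lt σ μ i.isLt]

theorem multiShift_multiShift (k l : ℕ) (n : Site D) (μ : ℕ → Fin D) :
    multiShift l (multiShift k n μ) (fun i => μ (i + k)) = multiShift (k + l) n μ := by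
  funext a
  simp only [multiShift, Finset.sum_range_add, add_assoc]
  simp only [Nat.add_comm]

theorem multiShift_succ (k : ℕ) (n : Site D) (μ : ℕ → Fin D) :
    multiShift (k + 1) n μ = shiftSite (multiShift k n fun i => μ (i + 1)) (μ 0) := by
  funext a
  simp only [multiShift, shiftSite, Finset.sum_range_succ', add_assoc]

theorem multiShift_shiftSite (k : ℕ) (n : Site D) (a : Fin D) (μ : ℕ → Fin D) :
    multiShift k (shiftSite n a) μ = shiftSite (multiShift k n μ) a := by
  funext b
  simp only [multiShift, shiftSite, add_right_comm]

theorem shiftSite_comm (n : Site D) (a b : Fin D) :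
    shiftSite (shiftSite n a) b = shiftSite (shiftSite n b) a := by
  funext c
  simp only [shiftSite, add_right_comm]

/-- The noncommutative tensor product `ω_{μ₁⋯μ_k}(n) θ_{ν₁⋯ν_l}(n + ê_{μ₁} + ⋯ + ê_{μ_k})`, whose
antisymmetrization is the wedge product. -/
def tensor (k : ℕ) : Coeff D →ₗ[ℝ] Coeff D →ₗ[ℝ] Coeff D :=
  LinearMap.mk₂ ℝ (fun ω θ n μ => ω n μ * θ (multiShift k n μ) fun i => μ (i + k))
    (fun _ _ _ => by ext; simp [add_mul]) (fun _ _ _ => by ext; simp [mul_assoc])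
    (fun _ _ _ => by ext; simp [mul_add]) (fun _ _ _ => by ext; simp [mul_left_comm])

theorem tensor_apply (k : ℕ) (ω θ : Coeff D) (n : Site D) (μ : ℕ → Fin D) :
    tensor k ω θ n μ = ω n μ * θ (multiShift k n μ) fun i => μ (i + k) :=
  rfl

/-- The lattice gradient `Δ_{μ₁} ω_{μ₂⋯μ_{k+1}}(n)`, whose antisymmetrization is the exterior
derivative. -/
def latticeGradient : Coeff D →ₗ[ℝ] Coeff D where
  toFun ω n μ := fdiff (μ 0) (fun x => ω x fun i => μ (i + 1)) n
  map_add' _ _ := by ext; simp [fdiff]; ring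
  map_smul' _ _ := by ext; simp [fdiff, mul_sub]

theorem latticeGradient_apply (ω : Coeff D) (n : Site D) (μ : ℕ → Fin D) :
    latticeGradient ω n μ =
      ω (shiftSite n (μ 0)) (fun i => μ (i + 1)) - ω n fun i => μ (i + 1) :=
  rfl

theorem wedge_eq (k l : ℕ) (ω θ : Coeff D) : wedge k l ω θ = altₗ (k + l) (tensor k ω θ) :=
  alt_eq_altₗ _ _

theorem extd_eq (k : ℕ) (ω : Coeff D) : extd k ω = altₗ (k + 1) (latticeGradient ω) :=
  alt_eq_altₗ _ _

theorem tensor_assoc (k l : ℕ) (ω θ ψ : Coeff D) :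
    tensor (k + l) (tensor k ω θ) ψ = tensor k ω (tensor l θ ψ) := by
  funext n μ
  simp only [tensor_apply, multiShift_multiShift, mul_assoc, Nat.add_assoc, Nat.add_comm k l]

theorem altₗ_tensor_altₗ_left (k l : ℕ) (ω θ : Coeff D) :
    altₗ (k + l) (tensor k (altₗ k ω) θ) = altₗ (k + l) (tensor k ω θ) := by
  refine altₗ_map_altₗ (Fin.castLEEmb (Nat.le_add_right k l)) (tensor k |>.flip θ) fun σ => ?_
  rw [permRep_viaFintypeEmbedding_castLEEmb]
  funext n μ
  simp only [LinearMap.flip_apply, tensor_apply, permRep_apply, multiShift_permuteIndices,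
    permuteIndices_of_le σ μ (Nat.le_add_left k _)]

theorem altₗ_tensor_altₗ_right (k l : ℕ) {ω : Coeff D} (hω : ∀ n, DependsOn (ω n) (Set.Iio k))
    (θ : Coeff D) : altₗ (k + l) (tensor k ω (altₗ l θ)) = altₗ (k + l) (tensor k ω θ) := by
  have hf : ∀ i : Fin l, (Fin.natAddEmb k i : ℕ) = i + k := fun i => Nat.add_comm k i
  refine altₗ_map_altₗ (Fin.natAddEmb k) (tensor k ω) fun σ => ?_
  funext n μ
  have fixed : ∀ i < k,
      permuteIndices (k + l) (σ.viaFintypeEmbedding (Fin.natAddEmb k)) μ i = μ i :=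
    fun _ => permuteIndices_viaFintypeEmbedding_of_lt hf σ μ
  simp only [tensor_apply, permRep_apply, permuteIndices_viaFintypeEmbedding_add hf,
    multiShift_congr n fixed, hω n fixed]

theorem altₗ_latticeGradient_altₗ (k : ℕ) (ω : Coeff D) :
    altₗ (k + 1) (latticeGradient (altₗ k ω)) = altₗ (k + 1) (latticeGradient ω) := by
  have hf : ∀ i : Fin k, (Fin.addNatEmb 1 i : ℕ) = i + 1 := fun _ => rfl
  refine altₗ_map_altₗ (Fin.addNatEmb 1) latticeGradient fun σ => ?_
  funext n μ
  simp only [latticeGradient_apply, permRep_apply, permuteIndices_viaFintypeEmbedding_add hf,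
    permuteIndices_viaFintypeEmbedding_of_lt hf σ μ Nat.zero_lt_one]

-- The rotation carries the new derivative index past the `k` indices of `ω`; its sign is `(-1)ᵏ`.
theorem latticeGradient_tensor (k : ℕ) {ω : Coeff D} (hω : ∀ n, DependsOn (ω n) (Set.Iio k))
    (θ : Coeff D) :
    latticeGradient (tensor k ω θ) = tensor (k + 1) (latticeGradient ω) θ +
      permRep (k + 1) (finRotate (k + 1)) (tensor k ω (latticeGradient θ)) := by
  funext n μ
  set ν := permuteIndices (k + 1) (finRotate (k + 1)) μ with hν
  have hν_lt : ∀ i < k, ν i = μ (i + 1) := fun i hi => by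
    rw [hν, permuteIndices_of_lt _ _ (by omega), finRotate_of_lt hi]
  have hν_k : ν k = μ 0 := by
    rw [hν, permuteIndices_of_lt _ _ k.lt_succ_self]
    exact congrArg (fun j : Fin (k + 1) => μ j) finRotate_last
  have hν_add : (fun i => ν (i + 1 + k)) = fun i => μ (i + k + 1) := funext fun i => by
    rw [hν, permuteIndices_of_le _ _ (by omega), Nat.add_right_comm]
  simp only [Pi.add_apply, permRep_apply, tensor_apply, latticeGradient_apply, ← hν, hν_add,
    hω n hν_lt, multiShift_congr n hν_lt, multiShift_succ, multiShift_shiftSite, zero_add, hν_k,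
    ← Nat.add_assoc]
  ring

theorem permRep_swap_latticeGradient_latticeGradient (ω : Coeff D) :
    permRep 2 (Equiv.swap 0 1) (latticeGradient (latticeGradient ω)) =
      latticeGradient (latticeGradient ω) := by
  funext n μ
  set ν := permuteIndices 2 (Equiv.swap 0 1) μ with hν
  have hν_zero : ν 0 = μ 1 := permuteIndices_of_lt _ _ Nat.zero_lt_two
  have hν_one : ν 1 = μ 0 := permuteIndices_of_lt _ _ Nat.one_lt_two
  have hν_add : (fun i => ν (i + 1 + 1)) = fun i => μ (i + 1 + 1) :=
    funext fun i => permuteIndices_of_le _ _ (Nat.le_add_left 2 i)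
  simp only [permRep_apply, latticeGradient_apply, ← hν, hν_add, zero_add, hν_zero, hν_one,
    shiftSite_comm n (μ 1)]
  ring

theorem extd_wedge (k l : ℕ) {ω : Coeff D} (hω : ∀ n, DependsOn (ω n) (Set.Iio k)) (θ : Coeff D) :
    extd (k + l) (wedge k l ω θ) =
      wedge (k + 1) l (extd k ω) θ + (-1 : ℝ) ^ k • wedge k (l + 1) ω (extd l θ) := by
  simp only [wedge_eq, extd_eq]
  rw [altₗ_latticeGradient_altₗ, latticeGradient_tensor k hω, map_add,
    altₗ_tensor_altₗ_right k (l + 1) hω, ← Nat.add_assoc, Nat.add_right_comm k l 1,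
    altₗ_tensor_altₗ_left, altₗ_permRep_of_le (Nat.le_add_right (k + 1) l)]
  simp [sign_finRotate]

theorem extd_extd (k : ℕ) (ω : Coeff D) : extd (k + 1) (extd k ω) = 0 := by
  rw [extd_eq, extd_eq, altₗ_latticeGradient_altₗ, ← self_eq_neg]
  have swap := altₗ_permRep_of_le (Nat.le_add_left 2 k) (Equiv.swap 0 1)
    (latticeGradient (latticeGradient ω))
  rw [permRep_swap_latticeGradient_latticeGradient, Equiv.Perm.sign_swap Fin.zero_ne_one] at swap
  simpa using swap

theorem wedge_assoc (k l m : ℕ) {ω : Coeff D} (hω : ∀ n, DependsOn (ω n) (Set.Iio k))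
    (θ ψ : Coeff D) :
    wedge (k + l) m (wedge k l ω θ) ψ = wedge k (l + m) ω (wedge l m θ ψ) := by
  simp only [wedge_eq]
  rw [altₗ_tensor_altₗ_left, altₗ_tensor_altₗ_right _ _ hω, tensor_assoc, Nat.add_assoc]

end TensorLevel

section DifferentialGradedRing

open DirectSum

variable {D : ℕ}

theorem isLatticeForm_iff {k : ℕ} {ω : Coeff D} :
    IsLatticeForm D k ω ↔ (∀ n, DependsOn (ω n) (Set.Iio k)) ∧
      ∀ σ, permRep k σ ω = ((Equiv.Perm.sign σ : ℤ) : ℝ) • ω :=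
  and_congr Iff.rfl
    ⟨fun h σ => funext fun n => funext fun μ => h n μ σ,
      fun h n μ σ => congrFun (congrFun (h σ) n) μ⟩

theorem dependsOn_altₗ {k : ℕ} {c : Coeff D} (hc : ∀ n, DependsOn (c n) (Set.Iio k)) (n : Site D) :
    DependsOn (altₗ k c n) (Set.Iio k) := by
  intro μ ν h
  simp only [altₗ_apply, Pi.smul_apply, Finset.sum_apply, permRep_apply]
  congr! 3 with σ
  refine hc n fun i hi => ?_
  rw [permuteIndices_of_lt σ μ hi, permuteIndices_of_lt σ ν hi, h _ (Fin.isLt _)]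

theorem isLatticeForm_altₗ {k : ℕ} {c : Coeff D} (hc : ∀ n, DependsOn (c n) (Set.Iio k)) :
    IsLatticeForm D k (altₗ k c) :=
  isLatticeForm_iff.2 ⟨dependsOn_altₗ hc, fun σ => permRep_altₗ σ c⟩

theorem isLatticeForm_wedge {k l : ℕ} {ω θ : Coeff D} (hω : ∀ n, DependsOn (ω n) (Set.Iio k))
    (hθ : ∀ n, DependsOn (θ n) (Set.Iio l)) : IsLatticeForm D (k + l) (wedge k l ω θ) := by
  rw [wedge_eq]
  refine isLatticeForm_altₗ fun n μ ν h => ?_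
  have h_lt : ∀ i < k, μ i = ν i := fun i hi => h i (Nat.lt_add_right l hi)
  have h_add : ∀ i < l, μ (i + k) = ν (i + k) := fun i hi =>
    h (i + k) (Nat.add_comm i k ▸ Nat.add_lt_add_left hi k)
  rw [tensor_apply, tensor_apply, multiShift_congr n h_lt, hω n h_lt, hθ _ h_add]

theorem isLatticeForm_extd {k : ℕ} {ω : Coeff D} (hω : ∀ n, DependsOn (ω n) (Set.Iio k)) :
    IsLatticeForm D (k + 1) (extd k ω) := by
  rw [extd_eq]
  refine isLatticeForm_altₗ fun n μ ν h => ?_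
  have h_succ : ∀ i < k, μ (i + 1) = ν (i + 1) := fun i hi => h (i + 1) (Nat.succ_lt_succ hi)
  rw [latticeGradient_apply, latticeGradient_apply, h 0 k.succ_pos, hω _ h_succ, hω n h_succ]

variable (D) in
/-- The space of lattice `k`-forms. -/
def latticeForm (k : ℕ) : Submodule ℝ (Coeff D) where
  carrier := {ω | IsLatticeForm D k ω}
  zero_mem' := ⟨fun _ _ _ _ => rfl, fun _ _ _ => (mul_zero _).symm⟩
  add_mem' hω hθ :=
    ⟨fun n μ ν h => congrArg₂ (· + ·) (hω.1 n μ ν h) (hθ.1 n μ ν h),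
      fun n μ σ => (congrArg₂ (· + ·) (hω.2 n μ σ) (hθ.2 n μ σ)).trans (mul_add _ _ _).symm⟩
  smul_mem' a _ hω :=
    ⟨fun n μ ν h => congrArg (a * ·) (hω.1 n μ ν h),
      fun n μ σ => (congrArg (a * ·) (hω.2 n μ σ)).trans (mul_left_comm _ _ _)⟩

theorem dependsOn_of_latticeForm {k : ℕ} (ω : latticeForm D k) (n : Site D) :
    DependsOn ((ω : Coeff D) n) (Set.Iio k) :=
  ω.2.1 n

theorem altₗ_latticeForm {k : ℕ} (ω : latticeForm D k) : altₗ k (ω : Coeff D) = ω :=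
  altₗ_eq_self (isLatticeForm_iff.1 ω.2).2

/-- The exterior derivative `extd k` as a linear map between spaces of lattice forms. -/
noncomputable def extdₗ (k : ℕ) : latticeForm D k →ₗ[ℝ] latticeForm D (k + 1) where
  toFun ω := ⟨extd k ω, isLatticeForm_extd (dependsOn_of_latticeForm ω)⟩
  map_add' _ _ := Subtype.ext <| by simp [extd_eq]
  map_smul' _ _ := Subtype.ext <| by simp [extd_eq]

theorem coe_extdₗ (k : ℕ) (ω : latticeForm D k) : (extdₗ k ω : Coeff D) = extd k ω :=
  rfl

theorem extdₗ_extdₗ (k : ℕ) (ω : latticeForm D k) : extdₗ (k + 1) (extdₗ k ω) = 0 :=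
  Subtype.ext <| by rw [coe_extdₗ, coe_extdₗ, extd_extd, ZeroMemClass.coe_zero]

theorem one_mem_latticeForm : (1 : Coeff D) ∈ latticeForm D 0 :=
  ⟨fun _ _ _ _ => rfl, fun _ _ σ => by simp [Subsingleton.elim σ 1]⟩

theorem wedge_one {k : ℕ} (ω : latticeForm D k) : wedge k 0 (ω : Coeff D) 1 = ω := by
  have tensor_one : tensor k (ω : Coeff D) 1 = ω := by ext; exact mul_one _
  rw [wedge_eq, tensor_one, add_zero, altₗ_latticeForm]

theorem one_wedge {k : ℕ} (ω : latticeForm D k) : wedge 0 k 1 (ω : Coeff D) = ω := by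
  have one_tensor : tensor 0 1 (ω : Coeff D) = ω := by
    ext n μ
    simp only [tensor_apply, multiShift_zero, Pi.one_apply, one_mul, add_zero]
  rw [wedge_eq, one_tensor, zero_add, altₗ_latticeForm]

noncomputable instance : GradedMonoid.GMul fun k => latticeForm D k where
  mul ω θ := ⟨wedge _ _ ω θ,
    isLatticeForm_wedge (dependsOn_of_latticeForm ω) (dependsOn_of_latticeForm θ)⟩

instance : GradedMonoid.GOne fun k => latticeForm D k where
  one := ⟨1, one_mem_latticeForm⟩

theorem coe_gMul {k l : ℕ} (ω : latticeForm D k) (θ : latticeForm D l) :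
    ((GradedMonoid.GMul.mul (A := fun k => latticeForm D k) ω θ : latticeForm D (k + l)) :
      Coeff D) = wedge k l (ω : Coeff D) θ :=
  rfl

noncomputable instance : GradedMonoid.GMonoid fun k => latticeForm D k where
  one_mul a := Sigma.subtype_ext (zero_add _) (one_wedge a.2)
  mul_one a := Sigma.subtype_ext (add_zero _) (wedge_one a.2)
  mul_assoc a b c := Sigma.subtype_ext (add_assoc _ _ _)
    (wedge_assoc _ _ _ (dependsOn_of_latticeForm a.2) _ _)

noncomputable instance : GSemiring fun k => latticeForm D k where
  mul_zero ω := Subtype.ext <| by simp [coe_gMul, wedge_eq]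
  zero_mul θ := Subtype.ext <| by simp [coe_gMul, wedge_eq]
  mul_add ω θ ψ := Subtype.ext <| by simp [coe_gMul, wedge_eq]
  add_mul ω θ ψ := Subtype.ext <| by simp [coe_gMul, wedge_eq]
  natCast n := n • (⟨1, one_mem_latticeForm⟩ : latticeForm D 0)
  natCast_zero := zero_nsmul _
  natCast_succ n := succ_nsmul _ n

noncomputable instance : GRing fun k => latticeForm D k where
  intCast n := n • (⟨1, one_mem_latticeForm⟩ : latticeForm D 0)
  intCast_ofNat n := natCast_zsmul _ n
  intCast_negSucc_ofNat n := negSucc_zsmul _ n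

theorem of_eq_of_add_of {i j l : ℕ} (hj : i = j) (hl : i = l) {ω : latticeForm D i}
    {θ : latticeForm D j} {ψ : latticeForm D l} (h : (ω : Coeff D) = θ + ψ) :
    of (fun k => latticeForm D k) i ω = of _ j θ + of _ l ψ := by
  subst hj hl
  rw [← map_add]
  exact congrArg _ (Subtype.ext h)

variable (D) in
/-- The noncommutative ring of inhomogeneous lattice forms, with the wedge product. -/
abbrev FormRing := ⨁ k, latticeForm D k

/-- The exterior derivative of inhomogeneous lattice forms. -/
noncomputable def formDeriv : FormRing D →+ FormRing D :=
  DirectSum.toAddMonoid fun k =>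
    (DirectSum.of (fun k => latticeForm D k) (k + 1)).comp (extdₗ k).toAddMonoidHom

theorem formDeriv_of (k : ℕ) (ω : latticeForm D k) :
    formDeriv (of (fun k => latticeForm D k) k ω) = of _ (k + 1) (extdₗ k ω) :=
  DirectSum.toAddMonoid_of _ _ _

theorem formDeriv_of_mul (k : ℕ) (ω : latticeForm D k) (w : FormRing D) :
    formDeriv (of _ k ω * w) =
      of _ (k + 1) (extdₗ k ω) * w + (-1 : ℝ) ^ k • (of _ k ω * formDeriv w) := by
  induction w using DirectSum.induction_on with
  | zero => simp
  | add v w hv hw => rw [mul_add, map_add, hv, hw, map_add, mul_add, mul_add, smul_add]; abel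
  | of l θ =>
    rw [of_mul_of, formDeriv_of, formDeriv_of, of_mul_of, of_mul_of, ← of_smul]
    refine of_eq_of_add_of (Nat.add_right_comm k l 1) rfl ?_
    simp only [coe_extdₗ, coe_gMul, Submodule.coe_smul]
    exact extd_wedge k l (dependsOn_of_latticeForm ω) θ

theorem formDeriv_one : formDeriv (1 : FormRing D) = 0 := by
  have extdₗ_one : extdₗ 0 ⟨1, one_mem_latticeForm (D := D)⟩ = 0 := by
    have gradient_one : latticeGradient (1 : Coeff D) = 0 := by ext; exact sub_self 1
    exact Subtype.ext <| by rw [coe_extdₗ, extd_eq, gradient_one, map_zero, ZeroMemClass.coe_zero]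
  exact (formDeriv_of 0 _).trans ((congrArg _ extdₗ_one).trans (map_zero _))

theorem formDeriv_of_two_mul {F : latticeForm D 2} (hF : extdₗ 2 F = 0) (w : FormRing D) :
    formDeriv (of _ 2 F * w) = of _ 2 F * formDeriv w := by
  rw [formDeriv_of_mul, hF, map_zero, zero_mul, zero_add, neg_one_sq, one_smul]

theorem formDeriv_of_one_mul (η : latticeForm D 1) (w : FormRing D) :
    formDeriv (of _ 1 η * w) = of _ 2 (extdₗ 1 η) * w - of _ 1 η * formDeriv w := by
  rw [formDeriv_of_mul, pow_one, sub_eq_add_neg]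
  exact congrArg _ (neg_one_smul ℝ (of (fun k => latticeForm D k) 1 η * formDeriv w))

end DifferentialGradedRing

section ChernSimons

open DirectSum Finset

variable {D : ℕ}

variable (D) in
/-- The coefficient function of an inhomogeneous form: the sum of those of its components. -/
noncomputable abbrev totalCoeff : FormRing D →ₗ[ℝ] Coeff D :=
  DirectSum.coeLinearMap (latticeForm D)

theorem wpow_mem_latticeForm (F : latticeForm D 2) (m : ℕ) :
    wpow (F : Coeff D) m ∈ latticeForm D (2 * m) := by
  induction m with
  | zero => exact one_mem_latticeForm
  | succ m ih =>
    rw [mul_add_one, add_comm]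
    exact isLatticeForm_wedge (dependsOn_of_latticeForm F) ih.1

theorem of_two_pow (F : latticeForm D 2) (m : ℕ) :
    of (fun k => latticeForm D k) 2 F ^ m = of _ (2 * m) ⟨wpow F m, wpow_mem_latticeForm F m⟩ := by
  induction m with
  | zero => rfl
  | succ m ih =>
    rw [pow_succ', ih, of_mul_of]
    exact of_eq_of_gradedMonoid_eq (Sigma.subtype_ext (Nat.add_comm 2 (2 * m)) rfl)

theorem wedgeList_singleton {k : ℕ} (ω : latticeForm D k) : wedgeList [(k, (ω : Coeff D))] = ω :=
  wedge_one ω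

theorem wedgeList_wpow_curv (A : latticeForm D 1) (m : ℕ) :
    wedgeList [(2 * m, wpow (curv (A : Coeff D)) m)] = wpow (extdₗ 1 A) m := by
  rw [curv, ← coe_extdₗ]
  exact wedgeList_singleton ⟨_, wpow_mem_latticeForm (extdₗ 1 A) m⟩

theorem totalCoeff_transgression (A A' : latticeForm D 1) (n : ℕ) :
    totalCoeff D (transgression (of _ 2 (extdₗ 1 A)) (of _ 1 (A' - A)) (of _ 2 (extdₗ 1 A')) n) =
      Q1 (n + 1) (A : Coeff D) A' := by
  simp only [transgression, Q1, map_sum, of_two_pow, of_mul_of, coeLinearMap_of,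
    Finset.Nat.sum_antidiagonal_eq_sum_range_succ_mk, Nat.add_sub_cancel]
  refine sum_congr rfl fun m _ => ?_
  rw [wedgeList, wedgeList, wedgeList_wpow_curv, curv, ← coe_extdₗ]
  rfl

theorem totalCoeff_formDeriv_monomial (A₀ A₁ A₂ : latticeForm D 1) (a b c : ℕ) :
    totalCoeff D (formDeriv (of _ 2 (extdₗ 1 A₀) ^ a * (of _ 1 (A₁ - A₀) *
      (of _ 2 (extdₗ 1 A₁) ^ b * (of _ 1 (A₂ - A₁) * of _ 2 (extdₗ 1 A₂) ^ c))))) =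
      extd (2 * (a + b + c) + 2) (wedgeList [(2 * a, wpow (curv (A₀ : Coeff D)) a),
        (1, (A₁ : Coeff D) - A₀), (2 * b, wpow (curv (A₁ : Coeff D)) b),
        (1, (A₂ : Coeff D) - A₁), (2 * c, wpow (curv (A₂ : Coeff D)) c)]) := by
  have degree : 2 * (a + b + c) + 2 = 2 * a + (1 + (2 * b + (1 + 2 * c))) := by ring
  simp only [of_two_pow, of_mul_of, formDeriv_of, coeLinearMap_of]
  rw [degree, coe_extdₗ, wedgeList, wedgeList, wedgeList, wedgeList, wedgeList_wpow_curv]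
  simp only [curv, ← coe_extdₗ 1]
  rfl

theorem totalCoeff_formDeriv_sum_transgression (A₀ A₁ A₂ : latticeForm D 1) (n : ℕ) :
    totalCoeff D (formDeriv (∑ p ∈ antidiagonal n, of _ 2 (extdₗ 1 A₀) ^ p.1 * (of _ 1 (A₁ - A₀) *
      transgression (of _ 2 (extdₗ 1 A₁)) (of _ 1 (A₂ - A₁)) (of _ 2 (extdₗ 1 A₂)) p.2))) =
      extd (2 * (n + 2) - 2) (Q2 (n + 2) (A₀ : Coeff D) A₁ A₂) := by
  simp only [Q2, sum_antidiagonalTuple_succ 2, Finset.Nat.antidiagonalTuple_two, sum_map,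
    transgression, mul_sum, map_sum, totalCoeff_formDeriv_monomial, extd_eq, Nat.add_sub_cancel]
  refine sum_congr rfl fun p hp => sum_congr rfl fun q hq => ?_
  have degree : p.1 + q.1 + q.2 = n := by
    rw [add_assoc, mem_antidiagonal.1 hq, mem_antidiagonal.1 hp]
  rw [degree]
  rfl

end ChernSimons

/-- **Cocycle relation for first Chern–Simons type classes** (case `k = 2` of the
descent equations): for lattice 1-forms `A₀, A₁, A₂` on `ℤ^D` and `r ≥ 2`,
`Q_r^{(1)}(A₁,A₂) − Q_r^{(1)}(A₀,A₂) + Q_r^{(1)}(A₀,A₁) = d Q_r^{(2)}(A₀,A₁,A₂)`. -/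
theorem chern_simons_cocycle (D r : ℕ) (hr : 2 ≤ r) (A₀ A₁ A₂ : Coeff D)
    (h₀ : IsLatticeForm D 1 A₀) (h₁ : IsLatticeForm D 1 A₁) (h₂ : IsLatticeForm D 1 A₂) :
    Q1 r A₁ A₂ - Q1 r A₀ A₂ + Q1 r A₀ A₁ = extd (2 * r - 2) (Q2 r A₀ A₁ A₂) := by
  obtain ⟨n, rfl⟩ := Nat.exists_eq_add_of_le' hr
  lift A₀ to latticeForm D 1 using h₀
  lift A₁ to latticeForm D 1 using h₁
  lift A₂ to latticeForm D 1 using h₂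
  have formDeriv_curv_mul : ∀ (A : latticeForm D 1) w,
      formDeriv (DirectSum.of _ 2 (extdₗ 1 A) * w) =
        DirectSum.of _ 2 (extdₗ 1 A) * formDeriv w := fun A =>
    formDeriv_of_two_mul (extdₗ_extdₗ 1 A)
  have formDeriv_sub_mul : ∀ (A A' : latticeForm D 1) w,
      formDeriv (DirectSum.of _ 1 (A' - A) * w) =
        (DirectSum.of _ 2 (extdₗ 1 A') - DirectSum.of _ 2 (extdₗ 1 A)) * w -
          DirectSum.of _ 1 (A' - A) * formDeriv w := fun A A' w => by
    rw [formDeriv_of_one_mul, map_sub, map_sub]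
  have cocycle := transgression_cocycle formDeriv_one (formDeriv_curv_mul A₀)
    (formDeriv_curv_mul A₁) (formDeriv_curv_mul A₂) (formDeriv_sub_mul A₀ A₁)
    (formDeriv_sub_mul A₁ A₂) n
  rw [← map_add, sub_add_sub_cancel'] at cocycle
  simpa only [map_add (totalCoeff D), map_sub (totalCoeff D), totalCoeff_transgression,
    totalCoeff_formDeriv_sum_transgression] using congrArg (totalCoeff D) cocycle
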